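/- Every oriented 2-edge-connected graph with n vertices and m edges has at least 2^{(m-n)/3} nowhere-zero (Z/2 × Z/3)-flows. -/

import Mathlib

open scoped Classical

/-- A multigraph with an orientation: each edge `e` has a source `src e` and a target `tgt e`.
Loops and parallel edges are allowed. -/
structure Multigraph (V E : Type) where
  src : E → V
  tgt : E → V

namespace Multigraph

variable {V E : Type}

/-- `u` and `v` are joined by some edge satisfying the predicate `P`. -/
def adjVia (G : Multigraph V E) (P : E → Prop) (u v : V) : Prop :=
  ∃ e, P e ∧ ((G.src e = u ∧ G.tgt e = v) ∨ (G.src e = v ∧ G.tgt e = u))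

/-- `v` is reachable from `u` using only edges satisfying `P`. -/
def Reaches (G : Multigraph V E) (P : E → Prop) : V → V → Prop :=
  Relation.ReflTransGen (G.adjVia P)

/-- The graph is connected when only edges satisfying `P` are kept (all edges deleted
whose predicate fails, all vertices kept). -/
def ConnectedVia (G : Multigraph V E) (P : E → Prop) : Prop :=
  Nonempty V ∧ ∀ u v : V, G.Reaches P u v

def Connected (G : Multigraph V E) : Prop :=
  G.ConnectedVia fun _ => True

/-- `G` is `k`-edge-connected: it is connected and has no edge cut of size less than `k`;
equivalently, deleting any set of fewer than `k` edges leaves it connected. -/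
def EdgeConnected (G : Multigraph V E) (k : ℕ) : Prop :=
  ∀ S : Set E, S.ncard < k → G.ConnectedVia fun e => e ∉ S

/-- The degree of a vertex (loops counted twice). -/
noncomputable def degree (G : Multigraph V E) (v : V) : ℕ :=
  {e | G.src e = v}.ncard + {e | G.tgt e = v}.ncard

/-- Every vertex has degree exactly 3. -/
def Cubic (G : Multigraph V E) : Prop :=
  ∀ v : V, G.degree v = 3

/-- `φ : E → Γ` is a flow: at every vertex, the sum over outgoing edges equals the
sum over incoming edges. -/
def IsFlow [Fintype E] {Γ : Type} [AddCommGroup Γ] (G : Multigraph V E) (φ : E → Γ) : Prop :=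
  ∀ v : V, (∑ e : E, if G.src e = v then φ e else 0) = ∑ e : E, if G.tgt e = v then φ e else 0

/-- The vertex `v` is an endpoint of some edge of `C`. -/
def touches (G : Multigraph V E) (C : Set E) (v : V) : Prop :=
  ∃ e ∈ C, G.src e = v ∨ G.tgt e = v

/-- An edge set `C` is (the edge set of) a cycle: it is nonempty, every vertex it touches
has degree exactly 2 in it, and it is connected. -/
def IsCycle (G : Multigraph V E) (C : Set E) : Prop :=
  C.Nonempty ∧
  (∀ v : V, G.touches C v →
    ({e ∈ C | G.src e = v}.ncard + {e ∈ C | G.tgt e = v}.ncard = 2)) ∧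
  (∀ u v : V, G.touches C u → G.touches C v → G.Reaches (· ∈ C) u v)

/-- `R` is `k`-closed: every cycle with at least one edge outside `R` has at least
`k+1` edges outside `R`. -/
def Closed (G : Multigraph V E) (k : ℕ) (R : Set E) : Prop :=
  ∀ C : Set E, G.IsCycle C → (C \ R).Nonempty → k + 1 ≤ (C \ R).ncard

/-- The `k`-closure `⟨S⟩ₖ` of `S` : the minimal `k`-closed set containing `S`
(the family of `k`-closed sets is closed under intersections). -/
def kClosure (G : Multigraph V E) (k : ℕ) (S : Set E) : Set E :=
  ⋂₀ {R : Set E | S ⊆ R ∧ G.Closed k R}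

/-- `S` is a `k`-base: its `k`-closure is the whole edge set. -/
def IsBase (G : Multigraph V E) (k : ℕ) (S : Set E) : Prop :=
  G.kClosure k S = Set.univ

/-- An edge set `S` is peripheral if `G − S` is connected. -/
def Peripheral (G : Multigraph V E) (S : Set E) : Prop :=
  G.ConnectedVia fun e => e ∉ S

/-- The spanning subgraph `(V, F)` is a forest, i.e. contains no cycle. -/
def IsForest (G : Multigraph V E) (F : Set E) : Prop :=
  ∀ C : Set E, G.IsCycle C → ¬ C ⊆ F

/-- `vs`, `es` describe a path: distinct vertices `vs 0, …, vs n` and distinct edges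
`es 0, …, es (n-1)` where `es i` joins `vs i` and `vs (i+1)`. -/
def IsPath (G : Multigraph V E) {n : ℕ} (vs : Fin (n + 1) → V) (es : Fin n → E) : Prop :=
  Function.Injective vs ∧ Function.Injective es ∧
  ∀ i : Fin n,
    (G.src (es i) = vs i.castSucc ∧ G.tgt (es i) = vs i.succ) ∨
    (G.src (es i) = vs i.succ ∧ G.tgt (es i) = vs i.castSucc)

/-- The edge `e` has `y` as one endpoint and its other endpoint in `X`,
i.e. `e ∈ E(y, X)`. -/
def joins (G : Multigraph V E) (e : E) (y : V) (X : Set V) : Prop :=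
  (G.src e = y ∧ G.tgt e ∈ X) ∨ (G.tgt e = y ∧ G.src e ∈ X)

/-- `W` is the vertex set of a connected component of `G − X`. -/
def IsComponent (G : Multigraph V E) (X W : Set V) : Prop :=
  W.Nonempty ∧ Disjoint W X ∧
  (∀ u ∈ W, ∀ v : V, v ∉ X → G.adjVia (fun _ => True) u v → v ∈ W) ∧
  (∀ u ∈ W, ∀ v ∈ W, G.Reaches (fun e => G.src e ∉ X ∧ G.tgt e ∉ X) u v)

/-- The subgraph induced on `W`, with only those of its edges satisfying `P` kept,
is connected. -/
def ConnectedOn (G : Multigraph V E) (W : Set V) (P : E → Prop) : Prop :=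
  ∀ u ∈ W, ∀ v ∈ W, G.Reaches (fun e => P e ∧ G.src e ∈ W ∧ G.tgt e ∈ W) u v

/-- The subgraph induced on `W` is `k`-edge-connected. -/
def EdgeConnectedOn (G : Multigraph V E) (W : Set V) (k : ℕ) : Prop :=
  ∀ S : Set E, S.ncard < k → G.ConnectedOn W fun e => e ∉ S

/-- Some cycle lies entirely inside the vertex set `X`. -/
def HasCycleIn (G : Multigraph V E) (X : Set V) : Prop :=
  ∃ C : Set E, G.IsCycle C ∧ ∀ e ∈ C, G.src e ∈ X ∧ G.tgt e ∈ X

/-- The edge cut `E(X, V \ X)`. -/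
def cutEdges (G : Multigraph V E) (X : Set V) : Set E :=
  {e | (G.src e ∈ X ∧ G.tgt e ∉ X) ∨ (G.src e ∉ X ∧ G.tgt e ∈ X)}

/-- A cubic graph is cyclically `k`-edge-connected if every edge cut separating two
cycle-containing parts has at least `k` edges. -/
def CyclicallyEdgeConnected (G : Multigraph V E) (k : ℕ) : Prop :=
  ∀ X : Set V, G.HasCycleIn X → G.HasCycleIn Xᶜ → k ≤ (G.cutEdges X).ncard

/-- `G` is 3-connected: more than 3 vertices, connected, and still connected after
deleting any two vertices. -/
def ThreeConnected [Fintype V] (G : Multigraph V E) : Prop :=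
  3 < Fintype.card V ∧ G.Connected ∧
    ∀ u v : V, G.ConnectedOn {w : V | w ≠ u ∧ w ≠ v} fun _ => True

/-- The graph `G − r` obtained by deleting the vertex `r` and all incident edges. -/
def deleteVertex (G : Multigraph V E) (r : V) :
    Multigraph {v : V // v ≠ r} {e : E // G.src e ≠ r ∧ G.tgt e ≠ r} where
  src e := ⟨G.src e.1, e.2.1⟩
  tgt e := ⟨G.tgt e.1, e.2.2⟩

end Multigraph

namespace Multigraph

section Boundary

variable {V E : Type} [Fintype E] {Γ : Type} [AddCommGroup Γ]

/-- The boundary of `φ`: the net amount of `φ` leaving each vertex. -/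
noncomputable def boundary (G : Multigraph V E) : (E → Γ) →+ (V → Γ) where
  toFun φ v := ∑ e, ((if G.src e = v then φ e else 0) - (if G.tgt e = v then φ e else 0))
  map_zero' := by ext v; simp
  map_add' φ ψ := by
    ext v
    simp only [Pi.add_apply, ← Finset.sum_add_distrib]
    refine Finset.sum_congr rfl fun e _ => ?_
    split_ifs <;> abel

theorem boundary_apply (G : Multigraph V E) (φ : E → Γ) (v : V) :
    G.boundary φ v =
      ∑ e, ((if G.src e = v then φ e else 0) - (if G.tgt e = v then φ e else 0)) := rfl

theorem isFlow_iff_boundary_eq_zero (G : Multigraph V E) (φ : E → Γ) :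
    G.IsFlow φ ↔ G.boundary φ = 0 := by
  simp only [IsFlow, funext_iff, boundary_apply, Finset.sum_sub_distrib, Pi.zero_apply,
    sub_eq_zero]

theorem boundary_comp (G : Multigraph V E) {Δ : Type} [AddCommGroup Δ] (θ : Γ →+ Δ)
    (φ : E → Γ) : G.boundary (fun e => θ (φ e)) = fun v => θ (G.boundary φ v) := by
  ext v
  simp only [boundary_apply, map_sum, map_sub, apply_ite θ, map_zero]

theorem boundary_prodMk (G : Multigraph V E) {Δ : Type} [AddCommGroup Δ]
    (φ : E → Γ) (ψ : E → Δ) (hφ : G.boundary φ = 0) (hψ : G.boundary ψ = 0) :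
    G.boundary (fun e => (φ e, ψ e)) = 0 := by
  ext v
  · have := G.boundary_comp (AddMonoidHom.fst Γ Δ) (fun e => (φ e, ψ e))
    simpa [hφ] using (congrFun this v).symm
  · have := G.boundary_comp (AddMonoidHom.snd Γ Δ) (fun e => (φ e, ψ e))
    simpa [hψ] using (congrFun this v).symm

theorem boundary_single (G : Multigraph V E) (e : E) (c : Γ) :
    G.boundary (Pi.single e c) = Pi.single (G.src e) c - Pi.single (G.tgt e) c := by
  ext v
  rw [boundary_apply, Finset.sum_eq_single e]
  · simp [Pi.single_apply, eq_comm]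
  · intro b _ hb
    simp [hb]
  · simp

theorem sum_boundary (G : Multigraph V E) (S : Finset V) (φ : E → Γ) :
    ∑ v ∈ S, G.boundary φ v =
      ∑ e, ((if G.src e ∈ S then φ e else 0) - (if G.tgt e ∈ S then φ e else 0)) := by
  simp only [boundary_apply]
  rw [Finset.sum_comm]
  refine Finset.sum_congr rfl fun e _ => ?_
  rw [Finset.sum_sub_distrib, Finset.sum_ite_eq, Finset.sum_ite_eq]

theorem sum_univ_boundary [Fintype V] (G : Multigraph V E) (φ : E → Γ) :
    ∑ v, G.boundary φ v = 0 := by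
  rw [sum_boundary]
  simp

theorem boundary_eq_zero_of_notMem (G : Multigraph V E) {S : Finset V} {φ : E → Γ}
    (hφ : ∀ e, φ e ≠ 0 → G.src e ∈ S ∧ G.tgt e ∈ S) {v : V} (hv : v ∉ S) :
    G.boundary φ v = 0 := by
  rw [boundary_apply]
  refine Finset.sum_eq_zero fun e _ => ?_
  by_cases h : φ e = 0
  · simp [h]
  · obtain ⟨h1, h2⟩ := hφ e h
    rw [if_neg (by rintro rfl; exact hv h1), if_neg (by rintro rfl; exact hv h2), sub_zero]

end Boundary

section Cut

variable {V E : Type} [Fintype E]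

/-- The edges with exactly one end in `S`. -/
noncomputable def cut (G : Multigraph V E) (S : Finset V) : Finset E :=
  {e | (G.src e ∈ S ∧ G.tgt e ∉ S) ∨ (G.src e ∉ S ∧ G.tgt e ∈ S)}

theorem mem_cut (G : Multigraph V E) (S : Finset V) (e : E) :
    e ∈ G.cut S ↔ (G.src e ∈ S ∧ G.tgt e ∉ S) ∨ (G.src e ∉ S ∧ G.tgt e ∈ S) := by
  simp [cut]

/-- The edges of the subgraph induced on `U` with exactly one end in `A`. -/
noncomputable def cutIn (G : Multigraph V E) (U A : Finset V) : Finset E :=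
  {e ∈ G.cut A | G.src e ∈ U ∧ G.tgt e ∈ U}

/-- If at most one edge of `G - X` leaves `U`, but at least two leave every proper nonempty subset,
then the subgraph induced on `U` is 2-edge-connected. -/
theorem two_le_card_cutIn (G : Multigraph V E) {X U : Finset V}
    (hU1 : ({e ∈ G.cut U | G.src e ∉ X ∧ G.tgt e ∉ X} : Finset E).card ≤ 1)
    (step : ∀ B ⊆ U, B.Nonempty → B ≠ U →
      2 ≤ ({e ∈ G.cut B | G.src e ∉ X ∧ G.tgt e ∉ X} : Finset E).card) :
    ∀ A ⊆ U, A.Nonempty → A ≠ U → 2 ≤ (G.cutIn U A).card := by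
  intro A hA hA0 hAU
  have hdiff : (U \ A).Nonempty := by
    rw [Finset.sdiff_nonempty]
    exact fun h => hAU (hA.antisymm h)
  have s1 := step A hA hA0 hAU
  have s2 := step (U \ A) Finset.sdiff_subset hdiff (by
    intro h
    obtain ⟨a, ha⟩ := hA0
    exact (Finset.mem_sdiff.1 (h.symm ▸ hA ha)).2 ha)
  let R : Finset E := {e ∈ G.cut U | G.src e ∉ X ∧ G.tgt e ∉ X}
  let RA : Finset E := {e ∈ R | G.src e ∈ A ∨ G.tgt e ∈ A}
  let RB : Finset E := {e ∈ R | ¬ (G.src e ∈ A ∨ G.tgt e ∈ A)}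
  have hR : RA.card + RB.card ≤ 1 := by
    rw [Finset.card_filter_add_card_filter_not]
    exact hU1
  have c1 : ({e ∈ G.cut A | G.src e ∉ X ∧ G.tgt e ∉ X} : Finset E) ⊆ G.cutIn U A ∪ RA := by
    intro e
    have := @hA (G.src e)
    have := @hA (G.tgt e)
    simp only [cutIn, RA, R, Finset.mem_union, Finset.mem_filter, mem_cut]
    grind
  have c2 : ({e ∈ G.cut (U \ A) | G.src e ∉ X ∧ G.tgt e ∉ X} : Finset E) ⊆
      G.cutIn U A ∪ RB := by
    intro e
    have := @hA (G.src e)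
    have := @hA (G.tgt e)
    simp only [cutIn, RB, R, Finset.mem_union, Finset.mem_filter, mem_cut, Finset.mem_sdiff]
    grind
  have d1 := (Finset.card_le_card c1).trans (Finset.card_union_le _ _)
  have d2 := (Finset.card_le_card c2).trans (Finset.card_union_le _ _)
  omega

variable [Fintype V]

/-- Every nontrivial edge cut has at least `k` edges. -/
def CutsAtLeast (G : Multigraph V E) (k : ℕ) : Prop :=
  ∀ S : Finset V, S.Nonempty → S ≠ Finset.univ → k ≤ (G.cut S).card

theorem EdgeConnected.cutsAtLeast {G : Multigraph V E} {k : ℕ} (hG : G.EdgeConnected k) :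
    G.CutsAtLeast k := by
  intro S ⟨x, hx⟩ hS
  by_contra! hk
  obtain ⟨y, hy⟩ : ∃ y, y ∉ S := by
    by_contra! h
    exact hS (Finset.eq_univ_iff_forall.2 h)
  have hr := (hG (G.cut S) (by rwa [Set.ncard_coe_finset])).2 x y
  have key : ∀ z, G.Reaches (fun e => e ∉ (G.cut S : Set E)) x z → z ∈ S := by
    intro z hz
    induction hz with
    | refl => exact hx
    | tail _ hbc ih =>
      obtain ⟨e, he, h⟩ := hbc
      rw [Finset.mem_coe, mem_cut] at he
      rcases h with ⟨rfl, rfl⟩ | ⟨rfl, rfl⟩ <;> tauto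
  exact hy (key y hr)

/-- The vertices reachable from `x` by arcs, where `e` may be traversed forwards if `P e` and
backwards if `N e`, together with a unit flow from `x` to each of them. -/
theorem exists_reachable_set (G : Multigraph V E) (x : V) (P N : E → Prop) :
    ∃ S : Finset V, x ∈ S ∧ (∀ e, P e → G.src e ∈ S → G.tgt e ∈ S) ∧
      (∀ e, N e → G.tgt e ∈ S → G.src e ∈ S) ∧
      ∀ y ∈ S, ∃ p : E → ℤ, (∀ e, p e = 0 ∨ (p e = 1 ∧ P e) ∨ (p e = -1 ∧ N e)) ∧
        (∀ e, p e ≠ 0 → G.src e ∈ S ∧ G.tgt e ∈ S) ∧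
        G.boundary p = Pi.single x 1 - Pi.single y 1 := by
  let Q : Finset V → Prop := fun S => x ∈ S ∧
      ∀ y ∈ S, ∃ p : E → ℤ, (∀ e, p e = 0 ∨ (p e = 1 ∧ P e) ∨ (p e = -1 ∧ N e)) ∧
        (∀ e, p e ≠ 0 → G.src e ∈ S ∧ G.tgt e ∈ S) ∧
        G.boundary p = Pi.single x 1 - Pi.single y 1
  have hQ : Q {x} := by
    refine ⟨by simp, fun y hy => ⟨0, by simp, by simp, ?_⟩⟩
    rw [Finset.mem_singleton.1 hy, map_zero, sub_self]
  have ext : ∀ S, Q S → ∀ u ∈ S, ∀ w ∉ S, ∀ e : E, ∀ c : ℤ,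
      ((c = 1 ∧ P e ∧ G.src e = u ∧ G.tgt e = w) ∨
        (c = -1 ∧ N e ∧ G.tgt e = u ∧ G.src e = w)) → Q (insert w S) := by
    intro S hS u hu w hw e c hc
    refine ⟨Finset.mem_insert_of_mem hS.1, fun y hy => ?_⟩
    rcases Finset.mem_insert.1 hy with rfl | hy
    · obtain ⟨p, hp1, hp2, hp3⟩ := hS.2 u hu
      have hpe : p e = 0 := by
        by_contra h
        have := hp2 e h
        rcases hc with ⟨_, _, _, rfl⟩ | ⟨_, _, _, rfl⟩
        · exact hw this.2
        · exact hw this.1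
      refine ⟨p + Pi.single e c, fun e' => ?_, fun e' he' => ?_, ?_⟩
      · by_cases h : e' = e
        · subst h
          rcases hc with ⟨rfl, h, _⟩ | ⟨rfl, h, _⟩ <;> simp [hpe, h]
        · simpa [h] using hp1 e'
      · by_cases h : e' = e
        · subst h
          rcases hc with ⟨_, _, rfl, rfl⟩ | ⟨_, _, rfl, rfl⟩ <;> simp [hu]
        · have := hp2 e' (by simpa [h] using he')
          exact ⟨Finset.mem_insert_of_mem this.1, Finset.mem_insert_of_mem this.2⟩
      · rw [map_add, hp3, boundary_single]
        rcases hc with ⟨rfl, _, rfl, rfl⟩ | ⟨rfl, _, rfl, rfl⟩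
        · abel
        · rw [Pi.single_neg, Pi.single_neg]; abel
    · obtain ⟨p, hp1, hp2, hp3⟩ := hS.2 y hy
      exact ⟨p, hp1, fun e' he' => ⟨Finset.mem_insert_of_mem (hp2 e' he').1,
        Finset.mem_insert_of_mem (hp2 e' he').2⟩, hp3⟩
  obtain ⟨S, -, hS⟩ := Finite.exists_le_maximal hQ
  have no_ext : ∀ w ∉ S, ¬ Q (insert w S) := fun w hw h =>
    hw (hS.2 h (Finset.subset_insert w S) (Finset.mem_insert_self w S))
  refine ⟨S, hS.1.1, fun e he hs => ?_, fun e he hs => ?_, hS.1.2⟩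
  · by_contra ht
    exact no_ext _ ht (ext S hS.1 _ hs _ ht e 1 (Or.inl ⟨rfl, he, rfl, rfl⟩))
  · by_contra ht
    exact no_ext _ ht (ext S hS.1 _ hs _ ht e (-1) (Or.inr ⟨rfl, he, rfl, rfl⟩))

theorem exists_augmentation (G : Multigraph V E) {U : Finset V} {x y : V} (hx : x ∈ U)
    (hy : y ∈ U)
    (hU : ∀ A ⊆ U, A.Nonempty → A ≠ U → 2 ≤ (G.cutIn U A).card)
    {k : ℤ} (hk : k < 2) {h : E → ℤ} (h1 : ∀ e, h e = 0 ∨ h e = 1 ∨ h e = -1)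
    (h2 : ∀ e, h e ≠ 0 → G.src e ∈ U ∧ G.tgt e ∈ U)
    (h3 : G.boundary h = k • (Pi.single x 1 - Pi.single y 1)) :
    ∃ h' : E → ℤ, (∀ e, h' e = 0 ∨ h' e = 1 ∨ h' e = -1) ∧
      (∀ e, h' e ≠ 0 → G.src e ∈ U ∧ G.tgt e ∈ U) ∧
      G.boundary h' = (k + 1) • (Pi.single x 1 - Pi.single y 1) := by
  obtain ⟨S, hxS, hP, hN, hS⟩ := G.exists_reachable_set x
    (fun e => (G.src e ∈ U ∧ G.tgt e ∈ U) ∧ h e ≠ 1)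
    (fun e => (G.src e ∈ U ∧ G.tgt e ∈ U) ∧ h e ≠ -1)
  by_cases hyS : y ∈ S
  · obtain ⟨p, hp1, -, hp3⟩ := hS y hyS
    refine ⟨h + p, fun e => ?_, fun e he => ?_, ?_⟩
    · have := h1 e
      have := hp1 e
      simp only [Pi.add_apply]
      omega
    · have := h2 e
      have := hp1 e
      by_cases hh : h e = 0
      · simp only [Pi.add_apply, hh, zero_add] at he
        tauto
      · tauto
    · rw [map_add, h3, hp3, add_smul, one_smul]
  · exfalso
    have hcard := hU (S ∩ U) Finset.inter_subset_right
      ⟨x, Finset.mem_inter.2 ⟨hxS, hx⟩⟩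
      (fun h => hyS (Finset.mem_inter.1 (h ▸ hy)).1)
    have hsum := G.sum_boundary (S ∩ U) h
    have hl : ∑ v ∈ S ∩ U, G.boundary h v = k := by
      simp [h3, Finset.sum_sub_distrib, ← Finset.mul_sum, Finset.sum_pi_single', hxS, hyS, hx]
    have hr : ∑ e, ((if G.src e ∈ S ∩ U then h e else 0) -
        (if G.tgt e ∈ S ∩ U then h e else 0)) = ((G.cutIn U (S ∩ U)).card : ℤ) := by
      rw [cutIn, cut, Finset.filter_filter, Finset.card_filter, Nat.cast_sum]
      refine Finset.sum_congr rfl fun e _ => ?_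
      have a1 := h1 e
      have a2 := h2 e
      have a3 := hP e
      have a4 := hN e
      simp only [Finset.mem_inter]
      by_cases b1 : G.src e ∈ U <;> by_cases b2 : G.tgt e ∈ U <;>
        by_cases b3 : G.src e ∈ S <;> by_cases b4 : G.tgt e ∈ S <;>
        simp_all
    rw [hl, hr] at hsum
    omega

/-- In a 2-edge-connected induced subgraph, any two vertices lie on a closed trail, encoded as a
`{0, 1, -1}`-valued flow `g` whose support connects `W`. -/
theorem exists_closed_trail (G : Multigraph V E) {U : Finset V} {x y : V} (hx : x ∈ U)
    (hy : y ∈ U)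
    (hU : ∀ A ⊆ U, A.Nonempty → A ≠ U → 2 ≤ (G.cutIn U A).card) :
    ∃ W ⊆ U, x ∈ W ∧ y ∈ W ∧ ∃ g : E → ℤ, (∀ e, g e = 0 ∨ g e = 1 ∨ g e = -1) ∧
      (∀ e, g e ≠ 0 → G.src e ∈ W ∧ G.tgt e ∈ W) ∧ G.boundary g = 0 ∧
      ∀ z ∈ W, ∃ p : E → ℤ, (∀ e, p e ≠ 0 → g e ≠ 0) ∧
        G.boundary p = Pi.single x 1 - Pi.single z 1 := by
  by_cases hxy : x = y
  · subst hxy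
    refine ⟨{x}, by simpa using hx, by simp, by simp, 0, by simp, by simp, map_zero _,
      fun z hz => ⟨0, by simp, ?_⟩⟩
    rw [Finset.mem_singleton.1 hz, map_zero, sub_self]
  obtain ⟨h₁, a1, a2, a3⟩ := G.exists_augmentation (k := 0) hx hy hU (by norm_num) (h := 0)
    (by simp) (by simp) (by simp)
  obtain ⟨h, b1, b2, b3⟩ := G.exists_augmentation hx hy hU (by norm_num) a1 a2 a3
  have net : ∀ S : Finset V, x ∈ S → y ∉ S → ∑ e, ((if G.src e ∈ S then h e else 0) -
      (if G.tgt e ∈ S then h e else 0)) = 2 := by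
    intro S hxS hyS
    rw [← sum_boundary, b3]
    simp [Finset.sum_sub_distrib, ← Finset.mul_sum, Finset.sum_pi_single', hxS, hyS]
  obtain ⟨S, hxS, hP, hN, hS⟩ := G.exists_reachable_set x (fun e => h e = 1) (fun e => h e = -1)
  have hyS : y ∈ S := by
    by_contra hyS
    have h1 := net S hxS hyS
    have h2 : ∑ e, ((if G.src e ∈ S then h e else 0) - (if G.tgt e ∈ S then h e else 0)) ≤ 0 := by
      refine Finset.sum_nonpos fun e _ => ?_
      have a1 := b1 e
      have a3 := hP e
      have a4 := hN e
      by_cases b3 : G.src e ∈ S <;> by_cases b4 : G.tgt e ∈ S <;> grind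
    omega
  obtain ⟨p, hp1, -, hp3⟩ := hS y hyS
  let g : E → ℤ := h - (2 : ℤ) • p
  have hg : ∀ e, g e = h e - 2 * p e := fun e => by simp [g]
  have hg1 : ∀ e, (g e = 0 ∨ g e = 1 ∨ g e = -1) ∧ (g e ≠ 0 ↔ h e ≠ 0) := fun e => by
    have := hg e
    have := hp1 e
    have := b1 e
    omega
  have hg0 : G.boundary g = 0 := by
    simp only [g]
    rw [map_sub, map_zsmul, b3, hp3]
    norm_num
  obtain ⟨W, hxW, hWP, hWN, hW⟩ :=
    G.exists_reachable_set x (fun e => g e ≠ 0) (fun e => g e ≠ 0)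
  have hWiff : ∀ e, g e ≠ 0 → (G.src e ∈ W ↔ G.tgt e ∈ W) := fun e he => ⟨hWP e he, hWN e he⟩
  have hyW : y ∈ W := by
    by_contra hyW
    have h1 := net W hxW hyW
    rw [Finset.sum_eq_zero] at h1
    · omega
    · intro e _
      by_cases he : h e = 0
      · simp [he]
      · simp [hWiff e ((hg1 e).2.2 he)]
  refine ⟨W ∩ U, Finset.inter_subset_right, Finset.mem_inter.2 ⟨hxW, hx⟩,
    Finset.mem_inter.2 ⟨hyW, hy⟩, fun e => if G.src e ∈ W then g e else 0, fun e => ?_,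
    fun e he => ?_, ?_, fun z hz => ?_⟩
  · dsimp only
    split_ifs
    · exact (hg1 e).1
    · exact Or.inl rfl
  · have hs : G.src e ∈ W := by
      by_contra hs
      simp [hs] at he
    simp only [hs, if_true] at he
    have := b2 e ((hg1 e).2.1 he)
    exact ⟨Finset.mem_inter.2 ⟨hs, this.1⟩, Finset.mem_inter.2 ⟨hWP e he hs, this.2⟩⟩
  · ext v
    have : G.boundary (fun e => if G.src e ∈ W then g e else 0) v =
        if v ∈ W then G.boundary g v else 0 := by
      simp only [boundary_apply]
      by_cases hv : v ∈ W
      · rw [if_pos hv]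
        refine Finset.sum_congr rfl fun e _ => ?_
        by_cases he : g e = 0
        · simp [he]
        · have := hWiff e he
          by_cases h1 : G.src e ∈ W
          · simp [h1]
          · have h2 : G.tgt e ∉ W := by tauto
            rw [if_neg h1, ite_self, ite_self]
            rw [if_neg (by rintro rfl; exact h1 hv), if_neg (by rintro rfl; exact h2 hv)]
      · rw [if_neg hv]
        refine Finset.sum_eq_zero fun e _ => ?_
        by_cases he : g e = 0
        · simp [he]
        · have := hWiff e he
          by_cases h1 : G.src e ∈ W
          · have h2 : G.tgt e ∈ W := by tauto
            rw [if_neg (by rintro rfl; exact hv h1), if_neg (by rintro rfl; exact hv h2), sub_zero]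
          · simp [h1]
    rw [this, hg0]
    simp
  · obtain ⟨q, hq1, hq2, hq3⟩ := hW z (Finset.mem_inter.1 hz).1
    refine ⟨q, fun e he => ?_, hq3⟩
    dsimp only
    rw [if_pos (hq2 e he).1]
    have := hq1 e
    tauto

/-- If the support of `g` connects `W`, then it carries every boundary on `W` of total zero. -/
theorem exists_boundary_eq (G : Multigraph V E) {W : Finset V} {x : V} {g : E → ℤ}
    (hg4 : ∀ z ∈ W, ∃ p : E → ℤ, (∀ e, p e ≠ 0 → g e ≠ 0) ∧
      G.boundary p = Pi.single x 1 - Pi.single z 1)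
    {β : V → ZMod 3} (hβ : ∀ v, β v ≠ 0 → v ∈ W) (hsum : ∑ v, β v = 0) :
    ∃ q : E → ZMod 3, (∀ e, q e ≠ 0 → g e ≠ 0) ∧ G.boundary q = β := by
  choose! p hp1 hp2 using hg4
  let θ : ℤ →+ ZMod 3 := Int.castAddHom (ZMod 3)
  refine ⟨-∑ z ∈ W, fun e => β z * (p z e : ZMod 3), fun e he hge => he ?_, ?_⟩
  · rw [Pi.neg_apply, Finset.sum_apply, Finset.sum_eq_zero, neg_zero]
    intro z hz
    rw [not_imp_not.1 (hp1 z hz e) hge, Int.cast_zero, mul_zero]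
  · have hb : ∀ z ∈ W, G.boundary (fun e => β z * (p z e : ZMod 3)) =
        Pi.single x (β z) - Pi.single z (β z) := by
      intro z hz
      have := G.boundary_comp ((AddMonoidHom.mulLeft (β z)).comp θ) (p z)
      simp only [AddMonoidHom.comp_apply, AddMonoidHom.coe_mulLeft, θ,
        Int.coe_castAddHom] at this
      rw [this, hp2 z hz]
      ext v
      simp [Pi.single_apply, mul_sub]
    rw [map_neg, map_sum, Finset.sum_congr rfl hb]
    ext v
    have hW : ∑ z ∈ W, β z = 0 := by
      rw [← hsum]
      exact Finset.sum_subset (Finset.subset_univ W) fun v _ hv => by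
        by_contra h
        exact hv (hβ v h)
    simp only [Finset.sum_sub_distrib, Pi.neg_apply, Pi.sub_apply, Finset.sum_apply,
      Pi.single_apply]
    rw [Finset.sum_ite_eq]
    have : ∑ z ∈ W, (if v = x then β z else 0) = 0 := by
      split_ifs
      · exact hW
      · simp
    rw [this]
    by_cases hv : v ∈ W
    · simp [hv]
    · simp [hv, not_imp_comm.1 (hβ v) hv]

/-- Every nonempty proper `X` is joined by two edges to some closed trail outside `X`. -/
theorem CutsAtLeast.exists_trail_attached {G : Multigraph V E} (hG : G.CutsAtLeast 3)
    {X : Finset V} (hX : X.Nonempty) (hX' : X ≠ Finset.univ) :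
    ∃ W : Finset V, W.Nonempty ∧ Disjoint W X ∧
      ∃ g : E → ℤ, (∀ e, g e = 0 ∨ g e = 1 ∨ g e = -1) ∧
      (∀ e, g e ≠ 0 → G.src e ∈ W ∧ G.tgt e ∈ W) ∧ G.boundary g = 0 ∧
      (∀ β : V → ZMod 3, (∀ v, β v ≠ 0 → v ∈ W) → ∑ v, β v = 0 →
        ∃ q : E → ZMod 3, (∀ e, q e ≠ 0 → g e ≠ 0) ∧ G.boundary q = β) ∧
      ∃ e₁ e₂ : E, e₁ ≠ e₂ ∧ ∀ e, (e = e₁ ∨ e = e₂) →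
        ((G.src e ∈ W ∧ G.tgt e ∈ X) ∨ (G.src e ∈ X ∧ G.tgt e ∈ W)) := by
  let Q : Finset V → Prop := fun U => U.Nonempty ∧ Disjoint U X ∧
    ({e ∈ G.cut U | G.src e ∉ X ∧ G.tgt e ∉ X} : Finset E).card ≤ 1
  have hQ : Q Xᶜ := by
    refine ⟨?_, disjoint_compl_left, ?_⟩
    · rwa [Finset.nonempty_iff_ne_empty, Ne, Finset.compl_eq_empty_iff]
    · rw [Finset.card_eq_zero.2]
      · simp
      · ext e
        simp [mem_cut]
        tauto
  obtain ⟨U, -, hU⟩ := Finite.exists_le_minimal hQ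
  obtain ⟨⟨hU0, hUX, hU1⟩, hmin⟩ := hU
  have hXU : ∀ v, v ∈ X → v ∉ U := fun v hv hv' => Finset.disjoint_left.1 hUX hv' hv
  have h2 : ∀ A ⊆ U, A.Nonempty → A ≠ U → 2 ≤ (G.cutIn U A).card :=
    G.two_le_card_cutIn hU1 fun B hB hB0 hBU => by
      by_contra! hlt
      exact hBU (hB.antisymm (hmin ⟨hB0, hUX.mono_left hB, by omega⟩ hB))
  have hcut := hG U hU0 (by
    rintro rfl
    obtain ⟨x, hx⟩ := hX
    exact hXU x hx (Finset.mem_univ x))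
  have hatt : 1 < ({e ∈ G.cut U | ¬ (G.src e ∉ X ∧ G.tgt e ∉ X)} : Finset E).card := by
    have := Finset.card_filter_add_card_filter_not (s := G.cut U)
      (fun e => G.src e ∉ X ∧ G.tgt e ∉ X)
    omega
  obtain ⟨e₁, he₁, e₂, he₂, hne⟩ := Finset.one_lt_card.1 hatt
  have hend : ∀ e ∈ ({e ∈ G.cut U | ¬ (G.src e ∉ X ∧ G.tgt e ∉ X)} : Finset E),
      ∃ x ∈ U, (G.src e = x ∧ G.tgt e ∈ X) ∨ (G.src e ∈ X ∧ G.tgt e = x) := by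
    intro e he
    simp only [Finset.mem_filter, mem_cut] at he
    have := hXU (G.src e)
    have := hXU (G.tgt e)
    by_cases hs : G.src e ∈ U
    · exact ⟨G.src e, hs, by tauto⟩
    · exact ⟨G.tgt e, by tauto, by tauto⟩
  obtain ⟨x, hx, hx'⟩ := hend e₁ he₁
  obtain ⟨y, hy, hy'⟩ := hend e₂ he₂
  obtain ⟨W, hWU, hxW, hyW, g, hg1, hg2, hg3, hg4⟩ := G.exists_closed_trail hx hy h2
  refine ⟨W, ⟨x, hxW⟩, hUX.mono_left hWU, g, hg1, hg2, hg3, ?_, e₁, e₂, hne, ?_⟩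
  · exact fun β hβ hsum => G.exists_boundary_eq hg4 hβ hsum
  · rintro e (rfl | rfl)
    · rcases hx' with ⟨rfl, h⟩ | ⟨h, rfl⟩ <;> tauto
    · rcases hy' with ⟨rfl, h⟩ | ⟨h, rfl⟩ <;> tauto

/-- On the subgraph induced on `X`, every boundary is attained by a function avoiding prescribed
values off the support of the `{0, 1, -1}`-valued flow `f`. -/
structure Avoids (G : Multigraph V E) (X : Finset V) (f : E → ℤ) : Prop where
  values : ∀ e, f e = 0 ∨ f e = 1 ∨ f e = -1
  support : ∀ e, f e ≠ 0 → G.src e ∈ X ∧ G.tgt e ∈ X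
  flow : G.boundary f = 0
  avoid : ∀ (h : E → ZMod 3) (β : V → ZMod 3), (∀ v, β v ≠ 0 → v ∈ X) → ∑ v, β v = 0 →
    ∃ ψ : E → ZMod 3, (∀ e, ψ e ≠ 0 → G.src e ∈ X ∧ G.tgt e ∈ X) ∧ G.boundary ψ = β ∧
      ∀ e, G.src e ∈ X → G.tgt e ∈ X → f e = 0 → ψ e ≠ h e

theorem avoids_singleton (G : Multigraph V E) (x : V) : G.Avoids {x} 0 where
  values := by simp
  support := by simp
  flow := map_zero _
  avoid h β hβ hsum := by
    refine ⟨fun e => if G.src e = x ∧ G.tgt e = x then h e + 1 else 0, fun e he => ?_, ?_,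
      fun e hs ht _ => ?_⟩
    · simp only [ne_eq, ite_eq_right_iff, Classical.not_imp] at he
      simpa using he.1
    · ext v
      have hβ0 : β v = 0 := by
        by_cases hv : v = x
        · subst hv
          rw [← hsum, Finset.sum_eq_single v]
          · intro b _ hb
            by_contra h
            exact hb (Finset.mem_singleton.1 (hβ b h))
          · simp
        · by_contra h
          exact hv (Finset.mem_singleton.1 (hβ v h))
      rw [hβ0, boundary_apply]
      refine Finset.sum_eq_zero fun e _ => ?_
      by_cases he : G.src e = x ∧ G.tgt e = x
      · simp [he.1, he.2]
      · simp [he]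
    · rw [Finset.mem_singleton] at hs ht
      simp [hs, ht]

/-- Two unknowns in `ZMod 3` with signs, a prescribed sum and one forbidden value each. -/
theorem exists_signed_sum_avoiding (s₁ s₂ t a b : ZMod 3) (h₁ : s₁ ≠ 0) (h₂ : s₂ ≠ 0) :
    ∃ c₁ c₂ : ZMod 3, s₁ * c₁ + s₂ * c₂ = t ∧ c₁ ≠ a ∧ c₂ ≠ b := by
  revert s₁ s₂ t a b
  decide

theorem Avoids.union {G : Multigraph V E} {X W : Finset V} {f g : E → ℤ} (hf : G.Avoids X f)
    (hWX : Disjoint W X) (hg1 : ∀ e, g e = 0 ∨ g e = 1 ∨ g e = -1)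
    (hg2 : ∀ e, g e ≠ 0 → G.src e ∈ W ∧ G.tgt e ∈ W) (hg3 : G.boundary g = 0)
    (hg4 : ∀ β : V → ZMod 3, (∀ v, β v ≠ 0 → v ∈ W) → ∑ v, β v = 0 →
        ∃ q : E → ZMod 3, (∀ e, q e ≠ 0 → g e ≠ 0) ∧ G.boundary q = β)
    {e₁ e₂ : E} (hne : e₁ ≠ e₂) (he : ∀ e, (e = e₁ ∨ e = e₂) →
        ((G.src e ∈ W ∧ G.tgt e ∈ X) ∨ (G.src e ∈ X ∧ G.tgt e ∈ W))) :
    G.Avoids (X ∪ W) (f + g) := by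
  have hd : ∀ v, v ∈ W → v ∉ X := fun v hv => Finset.disjoint_left.1 hWX hv
  have hfg : ∀ e, f e = 0 ∨ g e = 0 := by
    intro e
    by_contra! h
    exact hd _ (hg2 e h.2).1 (hf.support e h.1).1
  refine ⟨fun e => ?_, fun e hfe => ?_, by rw [map_add, hf.flow, hg3, add_zero],
    fun h β hβ hsum => ?_⟩
  · have := hfg e
    have := hf.values e
    have := hg1 e
    simp only [Pi.add_apply]
    omega
  · simp only [Finset.mem_union]
    by_cases h : f e = 0
    · have := hg2 e (by simpa [h] using hfe)
      tauto
    · have := hf.support e h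
      tauto
  let ψ₁ : E → ZMod 3 := fun e => if (G.src e ∈ X ∪ W ∧ G.tgt e ∈ X ∪ W) ∧
    ¬ (G.src e ∈ X ∧ G.tgt e ∈ X) ∧ g e = 0 ∧ e ≠ e₁ ∧ e ≠ e₂ then h e + 1 else 0
  let s : E → ZMod 3 := fun e => if G.src e ∈ W then 1 else -1
  have hs : ∀ e, s e ≠ 0 := fun e => by
    simp only [s]
    split_ifs <;> decide
  obtain ⟨c₁, c₂, hc, hc₁, hc₂⟩ := exists_signed_sum_avoiding (s e₁) (s e₂)
    (∑ v ∈ W, (β v - G.boundary ψ₁ v)) (h e₁) (h e₂) (hs e₁) (hs e₂)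
  have hsingle : ∀ e c, (e = e₁ ∨ e = e₂) →
      ∑ v ∈ W, G.boundary (Pi.single e c : E → ZMod 3) v = s e * c := by
    intro e c hee
    rw [boundary_single]
    simp only [Pi.sub_apply, Finset.sum_sub_distrib, Finset.sum_pi_single', s]
    rcases he e hee with ⟨h1, h2⟩ | ⟨h1, h2⟩
    · have : G.tgt e ∉ W := fun h => hd _ h h2
      simp [h1, this]
    · have : G.src e ∉ W := fun h => hd _ h h1
      simp [h2, this]
  let ψ₂ : E → ZMod 3 := ψ₁ + Pi.single e₁ c₁ + Pi.single e₂ c₂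
  have hψ₂e₁ : ψ₂ e₁ = c₁ := by simp [ψ₂, ψ₁, hne]
  have hψ₂e₂ : ψ₂ e₂ = c₂ := by simp [ψ₂, ψ₁, hne.symm]
  have hψ₂ : ∀ e, e ≠ e₁ → e ≠ e₂ → ψ₂ e = ψ₁ e := fun e h1 h2 => by
    simp [ψ₂, h1, h2]
  have hψ₂s : ∀ e, ψ₂ e ≠ 0 → (G.src e ∈ X ∪ W ∧ G.tgt e ∈ X ∪ W) ∧
      ¬ (G.src e ∈ X ∧ G.tgt e ∈ X) := by
    intro e hne0
    by_cases hee : e = e₁ ∨ e = e₂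
    · have h1 := he e hee
      have h2 := hd (G.src e)
      have h3 := hd (G.tgt e)
      simp only [Finset.mem_union]
      tauto
    · push Not at hee
      rw [hψ₂ e hee.1 hee.2] at hne0
      by_contra hcon
      exact hne0 (if_neg (by tauto))
  have hψ₂W : ∑ v ∈ W, (β v - G.boundary ψ₂ v) = 0 := by
    have : ∀ v, G.boundary ψ₂ v = G.boundary ψ₁ v + (G.boundary (Pi.single e₁ c₁) v +
        G.boundary (Pi.single e₂ c₂) v) := fun v => by
      simp only [ψ₂, map_add, Pi.add_apply, add_assoc]
    simp only [this, ← sub_sub, Finset.sum_sub_distrib]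
    simp only [Finset.sum_sub_distrib] at hc
    rw [hsingle e₁ c₁ (Or.inl rfl), hsingle e₂ c₂ (Or.inr rfl), ← hc]
    ring
  obtain ⟨q, hq1, hq2⟩ := hg4 (fun v => if v ∈ W then β v - G.boundary ψ₂ v else 0)
    (fun v hv => by by_contra h; simp [h] at hv) (by
      rw [Finset.sum_ite_mem, Finset.univ_inter]; exact hψ₂W)
  obtain ⟨ψ₃, hψ₃s, hψ₃b, hψ₃a⟩ := hf.avoid h (β - G.boundary ψ₂ - G.boundary q)
    (fun v hv => by
      by_contra hvX
      refine hv ?_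
      simp only [Pi.sub_apply, hq2]
      by_cases hvW : v ∈ W
      · simp [hvW]
      · have hv' : v ∉ X ∪ W := by simp [hvX, hvW]
        have hb : β v = 0 := by
          by_contra h
          exact hv' (hβ v h)
        rw [if_neg hvW, hb, G.boundary_eq_zero_of_notMem (fun e h => (hψ₂s e h).1) hv']
        simp)
    (by simp only [Pi.sub_apply, Finset.sum_sub_distrib, sum_univ_boundary, hsum, sub_zero])
  refine ⟨ψ₂ + q + ψ₃, fun e hne0 => ?_, ?_, fun e hes het hfge => ?_⟩
  · by_cases h2 : ψ₂ e = 0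
    · by_cases h3 : q e = 0
      · have := hψ₃s e (by simpa [h2, h3] using hne0)
        simp only [Finset.mem_union]
        tauto
      · have := hg2 e (hq1 e h3)
        simp only [Finset.mem_union]
        tauto
    · exact (hψ₂s e h2).1
  · rw [map_add, map_add, hψ₃b]
    abel
  · have hfg0 : f e = 0 ∧ g e = 0 := by
      have := hfg e
      simp only [Pi.add_apply] at hfge
      omega
    have hq0 : q e = 0 := by
      by_contra h
      exact hq1 e h hfg0.2
    simp only [Pi.add_apply, hq0, add_zero]
    by_cases hX : G.src e ∈ X ∧ G.tgt e ∈ X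
    · have : ψ₂ e = 0 := by
        by_contra h
        exact (hψ₂s e h).2 hX
      rw [this, zero_add]
      exact hψ₃a e hX.1 hX.2 hfg0.1
    · have : ψ₃ e = 0 := by
        by_contra h
        exact hX (hψ₃s e h)
      rw [this, add_zero]
      by_cases h1 : e = e₁
      · rw [h1, hψ₂e₁]; exact hc₁
      by_cases h2 : e = e₂
      · rw [h2, hψ₂e₂]; exact hc₂
      rw [hψ₂ e h1 h2]
      simp only [ψ₁]
      rw [if_pos ⟨⟨hes, het⟩, hX, hfg0.2, h1, h2⟩]
      simp

/-- A graph without small cuts has a `{0, 1, -1}`-valued flow and a `ZMod 3`-flow which do not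
vanish simultaneously. -/
theorem CutsAtLeast.exists_flow_pair [Nonempty V] {G : Multigraph V E} (hG : G.CutsAtLeast 3) :
    ∃ (f : E → ℤ) (ψ : E → ZMod 3), (∀ e, f e = 0 ∨ f e = 1 ∨ f e = -1) ∧
      G.boundary f = 0 ∧ G.boundary ψ = 0 ∧ ∀ e, f e = 0 → ψ e ≠ 0 := by
  let Q : Finset V → Prop := fun X => X.Nonempty ∧ ∃ f, G.Avoids X f
  have hQ : Q {Classical.arbitrary V} := ⟨by simp, 0, G.avoids_singleton _⟩
  obtain ⟨X, -, hX⟩ := Finite.exists_le_maximal hQ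
  obtain ⟨⟨hX0, f, hf⟩, hmax⟩ := hX
  have huniv : X = Finset.univ := by
    by_contra hne
    obtain ⟨W, ⟨w, hw⟩, hWX, g, hg1, hg2, hg3, hg4, e₁, e₂, he, he'⟩ :=
      hG.exists_trail_attached hX0 hne
    have := hmax ⟨hX0.mono Finset.subset_union_left,
      f + g, hf.union hWX hg1 hg2 hg3 hg4 he he'⟩ Finset.subset_union_left
    exact Finset.disjoint_left.1 hWX hw (this (Finset.mem_union_right X hw))
  subst huniv
  obtain ⟨ψ, -, hψ1, hψ2⟩ := hf.avoid 0 0 (by simp) (by simp)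
  exact ⟨f, ψ, hf.values, hf.flow, hψ1, fun e he => hψ2 e (by simp) (by simp) he⟩

end Cut

section Count

variable {V E : Type} [Fintype V] [Fintype E]

/-- The support of a `{0, 1, -1}`-valued flow has at most `2 (m - n)` edges. -/
theorem CutsAtLeast.card_support_le {G : Multigraph V E} (hG : G.CutsAtLeast 3)
    (hV : 1 < Fintype.card V) {f : E → ℤ} (hf : ∀ e, f e = 0 ∨ f e = 1 ∨ f e = -1)
    (hf0 : G.boundary f = 0) :
    ({e | f e ≠ 0} : Finset E).card + 2 * Fintype.card V ≤ 2 * Fintype.card E := by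
  let C : Finset E := {e | f e ≠ 0}
  let fib : (E → V) → Finset E → V → ℕ := fun t S v => ({e ∈ S | t e = v} : Finset E).card
  have total : ∀ (t : E → V) (S : Finset E), S.card = ∑ v, fib t S v := fun t S =>
    Finset.card_eq_sum_card_fiberwise (t := Finset.univ)
      (fun _ _ => Finset.mem_coe.2 (Finset.mem_univ _))
  have key : ∀ v, fib G.src C v + fib G.tgt C v + 4 ≤
      2 * (fib G.src Finset.univ v + fib G.tgt Finset.univ v) := by
    intro v
    have hmono : ∀ t : E → V, fib t C v ≤ fib t Finset.univ v := fun t =>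
      Finset.card_le_card (Finset.filter_subset_filter _ (Finset.subset_univ C))
    have hdeg : 3 ≤ fib G.src Finset.univ v + fib G.tgt Finset.univ v := by
      refine (hG {v} (by simp) ?_).trans ((Finset.card_le_card ?_).trans (Finset.card_union_le _ _))
      · intro h
        rw [← Finset.card_univ, ← h, Finset.card_singleton] at hV
        omega
      · intro e
        simp only [mem_cut, Finset.mem_singleton, Finset.mem_union, Finset.mem_filter,
          Finset.mem_univ, true_and]
        tauto
    have heven : (2 : ℤ) ∣ ((fib G.src C v + fib G.tgt C v : ℕ) : ℤ) := by
      have h0 : G.boundary f v = 0 := by rw [hf0]; rfl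
      rw [boundary_apply] at h0
      rw [← sub_zero ((_ : ℕ) : ℤ), ← h0]
      simp only [fib, C, Finset.card_filter, Finset.sum_filter]
      push_cast
      rw [← Finset.sum_add_distrib, ← Finset.sum_sub_distrib]
      refine Finset.dvd_sum fun e _ => ?_
      rcases hf e with h | h | h <;> by_cases h1 : G.src e = v <;> by_cases h2 : G.tgt e = v <;>
        simp [h, h1, h2]
    have := hmono G.src
    have := hmono G.tgt
    omega
  have hsum := Finset.sum_le_sum fun v (_ : v ∈ Finset.univ) => key v
  simp only [Finset.sum_add_distrib, ← Finset.mul_sum, ← total, Finset.sum_const,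
    Finset.card_univ, smul_eq_mul] at hsum
  change C.card + _ ≤ _
  omega

/-- The nowhere-zero `ZMod 2 × ZMod 3`-flows. -/
abbrev NowhereZeroFlow (G : Multigraph V E) : Type :=
  {φ : E → ZMod 2 × ZMod 3 // G.IsFlow φ ∧ ∀ e : E, φ e ≠ 0}

/-- There are many `ZMod 2`-flows vanishing on `Z`. -/
theorem card_le_of_flows_vanishing (G : Multigraph V E) (Z : Finset E) :
    ∃ k : ℕ, Fintype.card E ≤ k + (Fintype.card V + Z.card) ∧
      Nat.card {φ : E → ZMod 2 // G.boundary φ = 0 ∧ ∀ e ∈ Z, φ e = 0} = 2 ^ k := by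
  let L : (E → ZMod 2) →ₗ[ZMod 2] (V → ZMod 2) × (Z → ZMod 2) :=
    LinearMap.prod (AddMonoidHom.toZModLinearMap 2 G.boundary)
      (LinearMap.funLeft (ZMod 2) (ZMod 2) Subtype.val)
  refine ⟨Module.finrank (ZMod 2) (LinearMap.ker L), ?_, ?_⟩
  · have h1 := L.finrank_range_add_finrank_ker
    have h2 := Submodule.finrank_le (LinearMap.range L)
    simp only [Module.finrank_prod, Module.finrank_fintype_fun_eq_card, Fintype.card_coe] at h1 h2
    omega
  · have h1 := Module.card_eq_pow_finrank (K := ZMod 2) (V := LinearMap.ker L)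
    rw [ZMod.card, ← Nat.card_eq_fintype_card] at h1
    rw [← h1]
    refine Nat.card_congr (Equiv.subtypeEquivRight fun φ => ?_)
    rw [LinearMap.mem_ker, LinearMap.prod_apply]
    refine Iff.trans ?_ Prod.mk_eq_zero.symm
    refine and_congr Iff.rfl ?_
    simp [funext_iff, LinearMap.funLeft_apply]

theorem exists_three_mul_card_zeros_le {f : E → ℤ} (hf : ∀ e, f e = 0 ∨ f e = 1 ∨ f e = -1)
    {ψ : E → ZMod 3} (hψ : ∀ e, f e = 0 → ψ e ≠ 0) :
    ∃ c : ZMod 3, 3 * ({e | ψ e + c * (f e : ZMod 3) = 0} : Finset E).card ≤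
      ({e | f e ≠ 0} : Finset E).card := by
  by_contra! hcon
  have hsum : ∑ c : ZMod 3, ({e | ψ e + c * (f e : ZMod 3) = 0} : Finset E).card =
      ({e | f e ≠ 0} : Finset E).card := by
    simp only [Finset.card_filter]
    rw [Finset.sum_comm]
    refine Finset.sum_congr rfl fun e _ => ?_
    have d0 : ∀ a : ZMod 3, a ≠ 0 → (∑ c : ZMod 3, if a + c * 0 = 0 then 1 else 0) = 0 := by
      intro a ha
      simp [ha]
    have d1 : ∀ a : ZMod 3, (∑ c : ZMod 3, if a + c * 1 = 0 then 1 else 0) = 1 := by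
      intro a
      simp [add_eq_zero_iff_eq_neg']
    have d2 : ∀ a : ZMod 3, (∑ c : ZMod 3, if a + c * -1 = 0 then 1 else 0) = 1 := by
      intro a
      simp [add_neg_eq_zero]
    rcases hf e with h | h | h
    · simpa [h] using d0 _ (hψ e h)
    · simpa [h] using d1 (ψ e)
    · simpa [h] using d2 (ψ e)
  have h3 := Finset.sum_lt_sum_of_nonempty (s := (Finset.univ : Finset (ZMod 3)))
    Finset.univ_nonempty fun c _ => hcon c
  rw [← Finset.mul_sum, hsum] at h3
  simp [ZMod.card] at h3

theorem rpow_le_card_of_flow_pair (G : Multigraph V E) {f : E → ℤ}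
    (hf : ∀ e, f e = 0 ∨ f e = 1 ∨ f e = -1) (hf0 : G.boundary f = 0) {ψ : E → ZMod 3}
    (hψ0 : G.boundary ψ = 0) (hψ : ∀ e, f e = 0 → ψ e ≠ 0)
    (hcard : ({e | f e ≠ 0} : Finset E).card + 2 * Fintype.card V ≤ 2 * Fintype.card E ∨
      Fintype.card E ≤ Fintype.card V) :
    (2 : ℝ) ^ (((Fintype.card E : ℝ) - (Fintype.card V : ℝ)) / 3) ≤
      Nat.card G.NowhereZeroFlow := by
  obtain ⟨c, hc⟩ := exists_three_mul_card_zeros_le hf hψ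
  obtain ⟨k, hk, hKcard⟩ :=
    G.card_le_of_flows_vanishing {e | ψ e + c * (f e : ZMod 3) = 0}
  have hle : 2 ^ k ≤ Nat.card G.NowhereZeroFlow := by
    rw [← hKcard]
    have hf2 : G.boundary (fun e => (f e : ZMod 2)) = 0 := by
      have := G.boundary_comp (Int.castAddHom (ZMod 2)) f
      simp only [Int.coe_castAddHom, hf0] at this
      rw [this]
      ext v
      simp
    have hf3 : G.boundary (fun e => c * (f e : ZMod 3)) = 0 := by
      have := G.boundary_comp ((AddMonoidHom.mulLeft c).comp (Int.castAddHom (ZMod 3))) f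
      simp only [AddMonoidHom.comp_apply, AddMonoidHom.coe_mulLeft, Int.coe_castAddHom,
        hf0] at this
      rw [this]
      ext v
      simp
    refine Nat.card_le_card_of_injective (fun φ => ⟨fun e => ((φ.1 + fun e => (f e : ZMod 2)) e,
      (ψ + fun e => c * (f e : ZMod 3)) e), ?_, fun e he => ?_⟩) fun φ φ' h => ?_
    · rw [isFlow_iff_boundary_eq_zero]
      apply boundary_prodMk
      · rw [map_add, φ.2.1, hf2, add_zero]
      · rw [map_add, hψ0, hf3, add_zero]
    · simp only [Pi.add_apply, Prod.mk_eq_zero] at he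
      have hφ := φ.2.2 e (by simpa using he.2)
      rw [hφ, zero_add] at he
      rcases hf e with h | h | h
      · exact hψ e h (by simpa [h] using he.2)
      · simp [h] at he
      · simp [h] at he
    · ext e
      have := congrFun (congrArg Subtype.val h) e
      simpa using congrArg Prod.fst this
  have hreal : (((Fintype.card E : ℝ) - (Fintype.card V : ℝ)) / 3) ≤ (k : ℝ) := by
    rw [div_le_iff₀ (by norm_num), sub_le_iff_le_add]
    have : Fintype.card E ≤ k * 3 + Fintype.card V := by omega
    exact_mod_cast this
  calc (2 : ℝ) ^ (((Fintype.card E : ℝ) - (Fintype.card V : ℝ)) / 3)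
      ≤ (2 : ℝ) ^ (k : ℝ) := Real.rpow_le_rpow_of_exponent_le (by norm_num) hreal
    _ = ((2 ^ k : ℕ) : ℝ) := by rw [Real.rpow_natCast]; push_cast; rfl
    _ ≤ _ := by exact_mod_cast hle

theorem CutsAtLeast.rpow_le_card [Nonempty V] {G : Multigraph V E} (hG : G.CutsAtLeast 3) :
    (2 : ℝ) ^ (((Fintype.card E : ℝ) - (Fintype.card V : ℝ)) / 3) ≤
      Nat.card G.NowhereZeroFlow := by
  by_cases hV : 1 < Fintype.card V
  · obtain ⟨f, ψ, hf, hf0, hψ0, hψ⟩ := hG.exists_flow_pair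
    exact G.rpow_le_card_of_flow_pair hf hf0 hψ0 hψ (Or.inl (hG.card_support_le hV hf hf0))
  · have hsub : Subsingleton V := Fintype.card_le_one_iff_subsingleton.1 (not_lt.1 hV)
    have h1 : Fintype.card V = 1 := le_antisymm (not_lt.1 hV) Fintype.card_pos
    refine G.rpow_le_card_of_flow_pair (f := 0) (ψ := fun _ => 1) (by simp) (map_zero _) ?_
      (by simp) ?_
    · ext v
      simp [boundary_apply, eq_iff_true_of_subsingleton]
    · simp only [Pi.zero_apply, ne_eq, not_true_eq_false, Finset.filter_false, Finset.card_empty]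
      omega

end Count

section Contract

variable {V E : Type}

/-- The retraction of `V` onto `V \ {b}` sending `b` to `a`. -/
noncomputable def mergeInto {a b : V} (hab : a ≠ b) (v : V) : {v : V // v ≠ b} :=
  if h : v = b then ⟨a, hab⟩ else ⟨v, h⟩

/-- The graph obtained by contracting the edge `e` onto its source. -/
noncomputable def contract (G : Multigraph V E) {e : E} (he : G.src e ≠ G.tgt e) :
    Multigraph {v : V // v ≠ G.tgt e} {e' : E // e' ≠ e} where
  src e' := mergeInto he (G.src e')
  tgt e' := mergeInto he (G.tgt e')

variable [Fintype V] [Fintype E]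

theorem CutsAtLeast.contract {G : Multigraph V E} {k : ℕ} (hG : G.CutsAtLeast k) {e : E}
    (he : G.src e ≠ G.tgt e) : (G.contract he).CutsAtLeast k := by
  intro S hS hS'
  let T : Finset V := {v | mergeInto he v ∈ S}
  have hret : ∀ v : {v : V // v ≠ G.tgt e}, mergeInto he v.1 = v := fun v => dif_neg v.2
  have hT : T.Nonempty := by
    obtain ⟨v, hv⟩ := hS
    exact ⟨v.1, by simpa [T, hret] using hv⟩
  have hT' : T ≠ Finset.univ := by
    intro h
    refine hS' (Finset.eq_univ_iff_forall.2 fun v => ?_)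
    have : v.1 ∈ T := h ▸ Finset.mem_univ _
    simpa [T, hret] using this
  refine (hG T hT hT').trans ?_
  rw [← Finset.card_map (Function.Embedding.subtype fun e' => e' ≠ e)]
  refine Finset.card_le_card fun e' he' => ?_
  have hne : e' ≠ e := by
    rintro rfl
    have : mergeInto he (G.src e') = mergeInto he (G.tgt e') := by
      simp [mergeInto, he]
    simp [mem_cut, T, this] at he'
  rw [Finset.mem_map]
  refine ⟨⟨e', hne⟩, ?_, rfl⟩
  simpa [mem_cut, T, Multigraph.contract] using he'

theorem boundary_contract (G : Multigraph V E) {e : E} (he : G.src e ≠ G.tgt e) {Γ : Type}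
    [AddCommGroup Γ] (φ : E → Γ) (w : {v : V // v ≠ G.tgt e}) :
    (G.contract he).boundary (fun e' => φ e'.1) w =
      ∑ v with mergeInto he v = w, G.boundary φ v := by
  rw [sum_boundary, boundary_apply]
  simp only [Finset.mem_filter, Finset.mem_univ, true_and, Multigraph.contract]
  have hz : ((if mergeInto he (G.src e) = w then φ e else 0) -
      (if mergeInto he (G.tgt e) = w then φ e else 0)) = 0 := by
    have : mergeInto he (G.src e) = mergeInto he (G.tgt e) := by
      simp [mergeInto, he]
    rw [this, sub_self]
  rw [← Finset.sum_erase (a := e) Finset.univ hz]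
  refine Finset.sum_bij (fun e' _ => e'.1) ?_ ?_ ?_ ?_
  · exact fun e' _ => Finset.mem_erase.2 ⟨e'.2, Finset.mem_univ _⟩
  · exact fun _ _ _ _ h => Subtype.ext h
  · exact fun e' h => ⟨⟨e', (Finset.mem_erase.1 h).1⟩, Finset.mem_univ _, rfl⟩
  · intros
    congr

/-- Every flow of the contraction extends to a flow. -/
theorem exists_flow_extension (G : Multigraph V E) {e : E} (he : G.src e ≠ G.tgt e) {Γ : Type}
    [AddCommGroup Γ] {φ' : {e' : E // e' ≠ e} → Γ} (hφ' : (G.contract he).boundary φ' = 0) :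
    ∃ φ : E → Γ, G.boundary φ = 0 ∧ ∀ e', φ e'.1 = φ' e' := by
  let φ₀ : E → Γ := fun e' => if h : e' = e then 0 else φ' ⟨e', h⟩
  let φ : E → Γ := φ₀ + Pi.single e (G.boundary φ₀ (G.tgt e))
  have hext : ∀ e' : {e' : E // e' ≠ e}, φ e'.1 = φ' e' := fun e' => by
    simp [φ, φ₀, e'.2]
  have htgt : G.boundary φ (G.tgt e) = 0 := by
    simp only [φ, map_add, boundary_single, Pi.add_apply, Pi.sub_apply, Pi.single_eq_same,
      Pi.single_eq_of_ne he.symm]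
    abel
  refine ⟨φ, ?_, hext⟩
  have hmerge : ∀ w : {v : V // v ≠ G.tgt e}, ∑ v with mergeInto he v = w, G.boundary φ v = 0 := by
    intro w
    rw [← boundary_contract, show (fun e' : {e' : E // e' ≠ e} => φ e'.1) = φ' from funext hext,
      hφ']
    rfl
  ext v
  by_cases hv : v = G.tgt e
  · rw [hv, htgt]; rfl
  · have := hmerge ⟨v, hv⟩
    rw [Finset.sum_eq_single v] at this
    · exact this
    · intro u hu huv
      by_cases hut : u = G.tgt e
      · rw [hut, htgt]
      · simp [mergeInto, hut, huv] at hu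
    · simp [mergeInto, hv]

theorem card_contract_le (G : Multigraph V E) {S : Finset V} {e f : E} (hef : e ≠ f)
    (hS : G.cut S = {e, f}) (he : G.src e ≠ G.tgt e) :
    Nat.card (G.contract he).NowhereZeroFlow ≤ Nat.card G.NowhereZeroFlow := by
  have hext : ∀ φ' : (G.contract he).NowhereZeroFlow, ∃ φ : G.NowhereZeroFlow,
      ∀ e', φ.1 e'.1 = φ'.1 e' := by
    intro φ'
    obtain ⟨φ, hφ, hφe⟩ := G.exists_flow_extension he
      ((isFlow_iff_boundary_eq_zero _ _).1 φ'.2.1)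
    refine ⟨⟨φ, (isFlow_iff_boundary_eq_zero _ _).2 hφ, fun e' => ?_⟩, hφe⟩
    by_cases hee : e' = e
    · subst hee
      intro h0
      have hsum := G.sum_boundary S φ
      rw [hφ, Finset.sum_eq_single f] at hsum
      · have hf : f ∈ G.cut S := by simp [hS]
        have hne : φ f ≠ 0 := by
          rw [hφe ⟨f, hef.symm⟩]
          exact φ'.2.2 _
        rw [mem_cut] at hf
        rcases hf with ⟨h1, h2⟩ | ⟨h1, h2⟩ <;> simp [h1, h2, hne.symm] at hsum
        all_goals exact hne hsum
      · intro d _ hd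
        by_cases hde : d = e'
        · simp [hde, h0]
        · have : d ∉ G.cut S := by simp [hS, hd, hde]
          rw [mem_cut] at this
          by_cases h1 : G.src d ∈ S <;> by_cases h2 : G.tgt d ∈ S <;> simp [h1, h2] at this ⊢
      · simp
    · have := hφe ⟨e', hee⟩
      rw [this]
      exact φ'.2.2 _
  choose F hF using hext
  refine Nat.card_le_card_of_injective F fun φ φ' h => Subtype.ext (funext fun e' => ?_)
  rw [← hF, ← hF, h]

end Contract

/-- The lower bound on the number of flows, for graphs given by their cut sizes. -/
theorem CutsAtLeast.two_rpow_le_card (m : ℕ) : ∀ {V E : Type} [Fintype V] [Fintype E] [Nonempty V]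
    (G : Multigraph V E), Fintype.card E = m → G.CutsAtLeast 2 →
    (2 : ℝ) ^ (((Fintype.card E : ℝ) - (Fintype.card V : ℝ)) / 3) ≤
      Nat.card G.NowhereZeroFlow := by
  induction m with
  | zero =>
    intro V E _ _ _ G hE hG
    refine CutsAtLeast.rpow_le_card fun S h1 h2 => ?_
    have := (hG S h1 h2).trans (Finset.card_le_univ _)
    omega
  | succ m ih =>
    intro V E _ _ _ G hE hG
    by_cases h3 : G.CutsAtLeast 3
    · exact h3.rpow_le_card
    · simp only [CutsAtLeast, not_forall, not_le] at h3
      obtain ⟨S, h1, h2, hlt⟩ := h3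
      obtain ⟨e, f, hef, hS⟩ := Finset.card_eq_two.1 (show (G.cut S).card = 2 by
        have := hG S h1 h2
        omega)
      have he : G.src e ≠ G.tgt e := by
        intro h
        have : e ∈ G.cut S := by simp [hS]
        simp [mem_cut, h] at this
      have hcE : Fintype.card {e' : E // e' ≠ e} + 1 = Fintype.card E := by
        rw [Fintype.card_subtype_compl, Fintype.card_subtype_eq]
        omega
      have hcV : Fintype.card {v : V // v ≠ G.tgt e} + 1 = Fintype.card V := by
        have : 0 < Fintype.card V := Fintype.card_pos
        rw [Fintype.card_subtype_compl, Fintype.card_subtype_eq]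
        omega
      have : Nonempty {v : V // v ≠ G.tgt e} := ⟨⟨G.src e, he⟩⟩
      have key := ih (G.contract he) (by omega) (hG.contract he)
      refine le_trans (le_of_eq ?_) (key.trans (Nat.cast_le.2 (G.card_contract_le hef hS he)))
      rw [← hcE, ← hcV]
      push_cast
      ring_nf

end Multigraph

/-- Every oriented 2-edge-connected graph with `n` vertices and `m` edges has at least
`2^((m-n)/3)` nowhere-zero `ℤ₂ × ℤ₃`-flows. -/
theorem many_nowhere_zero_Z2xZ3_flows {V E : Type} [Fintype V] [Fintype E]
    (G : Multigraph V E) (hG : G.EdgeConnected 2) :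
    (2 : ℝ) ^ (((Fintype.card E : ℝ) - (Fintype.card V : ℝ)) / 3) ≤
      Nat.card {φ : E → ZMod 2 × ZMod 3 // G.IsFlow φ ∧ ∀ e : E, φ e ≠ 0} := by
  have := (hG ∅ (by simp)).1
  exact Multigraph.CutsAtLeast.two_rpow_le_card _ G rfl hG.cutsAtLeast
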